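/- Fix ε ∈ (0, 1/2). For N ≥ 2 and 1 ≤ i ≤ N, define b*_{i,N}(x) = a_i(x)·a_{i+1}(x) if a_i(x)·a_{i+1}(x) ≤ N (log N)^{3/2+ε}, and 0 otherwise, and S*_N(x) = ∑_{i=1}^{N} b*_{i,N}(x). Then there exists a constant C > 0 such that for all N ≥ 2, the variance of S*_N with respect to the Gauss measure satisfies ∫_0^1 (S*_N)^2 dμ − (∫_0^1 S*_N dμ)^2 ≤ C · N^2 · (log N)^{5/2+ε}. -/

import Mathlib

/-!
The variance of `∑ bᵢ`, where `bᵢ = f ∘ T^{i-1}` and `f = a₁ a₂ 1_{a₁ a₂ ≤ M}` with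
`M = N (log N)^{3/2+ε}`, is at most a constant times `N ∫ f² dμ`; the second moment is then
estimated directly.

* Let `L` (`transfer`) be the transfer operator of the Gauss map with respect to `μ`. It is adjoint
  to composition with `T` (`integral_mul_comp`), and it contracts the Lipschitz seminorm on `(0,1)`
  by the factor `15/16` (`transfer_lipschitz`), by Abel summation over the inverse branches.
* `L² f` is a nonnegative combination of the explicit rank-two cylinder weights `wt2`, each of which
  has relative variation at most `7 |y - x|` (`transfer2_cyl_distortion`). Hence `L² f` is at most
  `8 ∫ f dμ` and has Lipschitz constant at most `56 ∫ f dμ`, so that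
  `Cov(f, f ∘ T^{n+2}) ≤ 56 (15/16)^n (∫ f dμ)² ≤ 56 (15/16)^n ∫ f² dμ` (`cov_bound`,
  `cov_bound_trunc`). Lags `0` and `1` are covered by Cauchy-Schwarz, and summing over all pairs of
  indices gives `variance_le`.
* The cylinder `a₁ = j`, `a₂ = k` contributes at most `2 / (j k)²` to `L² 1 = 1`, so
  `∫ f² dμ ≤ 2 #{(j, k) : j k ≤ M} ≤ 2 M H(⌊M⌋)` (`second_moment`) with `H` the harmonic sum, which
  is `O(M log N)`. As `N · M log N = N² (log N)^{5/2+ε}`, this is the claim.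
-/


open MeasureTheory Filter Real Set

/-- The Gauss map `T(x) = 1/x - ⌊1/x⌋`, with `T(0) = 0`. -/
noncomputable def gaussMap (x : ℝ) : ℝ := if x = 0 then 0 else 1 / x - ⌊1 / x⌋

/-- The `n`-th partial quotient `a_n(x) = ⌊1 / T^{n-1}(x)⌋` (for `n ≥ 1`). -/
noncomputable def pq (n : ℕ) (x : ℝ) : ℕ := ⌊1 / (gaussMap^[n - 1] x)⌋₊

/-- `S_n(x) = ∑_{i=1}^n a_i(x) a_{i+1}(x)`. -/
noncomputable def S (n : ℕ) (x : ℝ) : ℕ := ∑ i ∈ Finset.Icc 1 n, pq i x * pq (i + 1) x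

/-- The Gauss measure `μ(A) = (1/log 2) ∫_A dx/(1+x)` on `(0,1)`. -/
noncomputable def gaussMeasure : Measure ℝ :=
  (volume.restrict (Set.Ioo (0:ℝ) 1)).withDensity
    (fun x => ENNReal.ofReal (1 / (Real.log 2 * (1 + x))))


/-! ### Inverse branches and the transfer operator -/

/-- The `k`-th inverse branch `x ↦ 1/(k+1+x)` of the Gauss map; branches are indexed from `0`, so
the image of `(0,1)` is the interior of the cylinder `a₁ = k + 1`. -/
noncomputable def branch (k : ℕ) (x : ℝ) : ℝ := 1 / (k + 1 + x)

/-- The weight of the `k`-th inverse branch in the transfer operator with respect to the Gauss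
measure: `|branch' k x| * ρ (branch k x) / ρ x` with `ρ x = 1/(1+x)`. -/
noncomputable def wt (k : ℕ) (x : ℝ) : ℝ := (1 + x) / ((k + 1 + x) * (k + 2 + x))

/-- The transfer operator of the Gauss map with respect to the Gauss measure, set to `0` off
`(0,1)`. -/
noncomputable def transfer (f : ℝ → ℝ) (x : ℝ) : ℝ :=
  if x ∈ Ioo (0:ℝ) 1 then ∑' k, wt k x * f (branch k x) else 0

/-- Measurable, nonnegative and bounded real functions. -/
structure Good (f : ℝ → ℝ) : Prop where
  meas : Measurable f
  nonneg : ∀ x, 0 ≤ f x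
  bdd : ∃ B, ∀ x, f x ≤ B

lemma branch_mem (k : ℕ) {x : ℝ} (hx : x ∈ Ioo (0:ℝ) 1) : branch k x ∈ Ioo (0:ℝ) 1 := by
  have hk : (0:ℝ) ≤ k := k.cast_nonneg
  have := hx.1
  refine ⟨by unfold branch; positivity, ?_⟩
  unfold branch
  rw [div_lt_one (by positivity)]
  linarith

lemma wt_nonneg (k : ℕ) {x : ℝ} (hx : x ∈ Ioo (0:ℝ) 1) : 0 ≤ wt k x := by
  have := hx.1
  unfold wt
  positivity

lemma sum_wt (n : ℕ) {x : ℝ} (hx : x ∈ Ioo (0:ℝ) 1) :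
    ∑ k ∈ Finset.range n, wt k x = 1 - (1 + x) / (n + 1 + x) := by
  have := hx.1
  induction n with
  | zero => simp; rw [div_self (by positivity)]; simp
  | succ n ih =>
    rw [Finset.sum_range_succ, ih]
    unfold wt
    push_cast
    field_simp
    ring

lemma hasSum_wt {x : ℝ} (hx : x ∈ Ioo (0:ℝ) 1) : HasSum (fun k => wt k x) 1 := by
  rw [hasSum_iff_tendsto_nat_of_nonneg (fun k => wt_nonneg k hx)]
  simp_rw [sum_wt _ hx]
  have h1 : Tendsto (fun n : ℕ => (n:ℝ) + (1 + x)) atTop atTop :=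
    tendsto_atTop_add_const_right _ _ tendsto_natCast_atTop_atTop
  have h2 := (tendsto_const_nhds (x := 1 + x)).div_atTop h1
  have h3 := (tendsto_const_nhds (x := (1:ℝ))).sub h2
  simpa [add_assoc] using h3

lemma summable_transfer {f : ℝ → ℝ} (hf : Good f) {x : ℝ} (hx : x ∈ Ioo (0:ℝ) 1) :
    Summable (fun k => wt k x * f (branch k x)) := by
  obtain ⟨B, hB⟩ := hf.bdd
  refine Summable.of_nonneg_of_le (fun k => mul_nonneg (wt_nonneg k hx) (hf.nonneg _))
    (fun k => mul_le_mul_of_nonneg_left (hB _) (wt_nonneg k hx)) ?_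
  exact (hasSum_wt hx).summable.mul_right B

lemma measurable_branch (k : ℕ) : Measurable (branch k) := by
  unfold branch; fun_prop

lemma measurable_wt (k : ℕ) : Measurable (wt k) := by
  unfold wt; fun_prop

lemma ofReal_transfer {f : ℝ → ℝ} (hf : Good f) {x : ℝ} (hx : x ∈ Ioo (0:ℝ) 1) :
    ENNReal.ofReal (transfer f x)
      = ∑' k, ENNReal.ofReal (wt k x) * ENNReal.ofReal (f (branch k x)) := by
  rw [transfer, if_pos hx, ENNReal.ofReal_tsum_of_nonneg
    (fun k => mul_nonneg (wt_nonneg k hx) (hf.nonneg _)) (summable_transfer hf hx)]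
  exact tsum_congr fun k => ENNReal.ofReal_mul (wt_nonneg k hx)

lemma Good.transfer {f : ℝ → ℝ} (hf : Good f) : Good (transfer f) := by
  have h0 : ∀ x, 0 ≤ _root_.transfer f x := fun x => by
    by_cases hx : x ∈ Ioo (0:ℝ) 1
    · rw [_root_.transfer, if_pos hx]
      exact tsum_nonneg (fun k => mul_nonneg (wt_nonneg k hx) (hf.nonneg _))
    · rw [_root_.transfer, if_neg hx]
  refine ⟨?_, h0, ?_⟩
  · exact Measurable.ite measurableSet_Ioo (Measurable.tsum fun k =>
      (measurable_wt k).mul (hf.meas.comp (measurable_branch k))) measurable_const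
  · obtain ⟨B, hB⟩ := hf.bdd
    refine ⟨B, fun x => ?_⟩
    by_cases hx : x ∈ Ioo (0:ℝ) 1
    · rw [_root_.transfer, if_pos hx]
      refine ((summable_transfer hf hx).tsum_le_tsum
        (fun k => mul_le_mul_of_nonneg_left (hB _) (wt_nonneg k hx))
        ((hasSum_wt hx).summable.mul_right B)).trans ?_
      rw [((hasSum_wt hx).mul_right B).tsum_eq, one_mul]
    · rw [_root_.transfer, if_neg hx]
      exact (hf.nonneg 0).trans (hB 0)

lemma lintegral_gauss {f : ℝ → ENNReal} (hf : Measurable f) :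
    ∫⁻ x, f x ∂gaussMeasure
      = ∫⁻ x in Ioo (0:ℝ) 1, ENNReal.ofReal (1 / (Real.log 2 * (1 + x))) * f x := by
  unfold gaussMeasure
  rw [lintegral_withDensity_eq_lintegral_mul _ (by fun_prop) hf]
  rfl

/-- The cylinders `(1/(k+2), 1/(k+1))` exhaust `(0,1)` up to the countable set of points `1/n`. -/
lemma iUnion_branch :
    (⋃ k, branch k '' Ioo (0:ℝ) 1) =ᵐ[volume] Ioo (0:ℝ) 1 := by
  have hc : (range (fun n : ℕ => 1 / (n:ℝ))).Countable := countable_range _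
  have h0 : volume (range (fun n : ℕ => 1 / (n:ℝ))) = 0 := hc.measure_zero _
  have h1 : ∀ᵐ x : ℝ, x ∉ range (fun n : ℕ => 1 / (n:ℝ)) := by
    rwa [← measure_eq_zero_iff_ae_notMem]
  rw [eventuallyEq_set]
  filter_upwards [h1] with x hx
  constructor
  · rintro h
    obtain ⟨k, y, hy, rfl⟩ := mem_iUnion.1 h
    exact branch_mem k hy
  · intro h
    have hx0 := h.1
    have h1x : 1 < 1 / x := by rw [lt_div_iff₀ hx0]; linarith [h.2]
    have hfl : ((⌊1 / x⌋₊ : ℕ) : ℝ) ≤ 1 / x := Nat.floor_le (by positivity)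
    have hfl2 : 1 / x < (⌊1 / x⌋₊ : ℕ) + 1 := Nat.lt_floor_add_one _
    have hne : ((⌊1 / x⌋₊ : ℕ) : ℝ) ≠ 1 / x := fun he => hx ⟨⌊1 / x⌋₊, by simp only [he]; simp⟩
    have hlt := lt_of_le_of_ne hfl hne
    have hpos : 1 ≤ ⌊1 / x⌋₊ := Nat.le_floor (by simpa using h1x.le)
    refine mem_iUnion.2 ⟨⌊1 / x⌋₊ - 1, 1 / x - ⌊1 / x⌋₊, ⟨by linarith, by linarith⟩, ?_⟩
    unfold branch
    rw [Nat.cast_sub hpos]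
    simp

lemma floor_branch (k : ℕ) {x : ℝ} (hx : x ∈ Ioo (0:ℝ) 1) : ⌊1 / branch k x⌋₊ = k + 1 := by
  unfold branch
  rw [one_div_one_div, Nat.floor_eq_iff (by have := hx.1; positivity)]
  push_cast
  exact ⟨by linarith [hx.1], by linarith [hx.2]⟩

lemma gaussMap_branch (k : ℕ) {x : ℝ} (hx : x ∈ Ioo (0:ℝ) 1) : gaussMap (branch k x) = x := by
  have h : ⌊1 / branch k x⌋ = (k : ℤ) + 1 := by
    have := floor_branch k hx
    rw [← Int.natCast_floor_eq_floor (by have := (branch_mem k hx).1; positivity), this]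
    simp
  rw [gaussMap, if_neg (branch_mem k hx).1.ne', h]
  unfold branch
  rw [one_div_one_div]
  push_cast
  ring

lemma hasDeriv_branch (k : ℕ) : ∀ x ∈ Ioo (0:ℝ) 1,
    HasDerivWithinAt (branch k) (-1 / (k + 1 + x) ^ 2) (Ioo (0:ℝ) 1) x := fun x hx => by
  have h0 : ((k:ℝ) + 1 + x) ≠ 0 := by have := hx.1; positivity
  have h1 := (((hasDerivAt_id x).const_add ((k:ℝ) + 1)).inv h0).hasDerivWithinAt (s := Ioo 0 1)
  have h2 : branch k = (fun y => (k:ℝ) + 1 + id y)⁻¹ := by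
    funext y; simp [branch]
  rw [h2]
  exact h1

lemma injOn_branch (k : ℕ) : InjOn (branch k) (Ioo (0:ℝ) 1) := fun x hx y hy h => by
  rw [← gaussMap_branch k hx, ← gaussMap_branch k hy, h]

lemma measurableSet_branch (k : ℕ) : MeasurableSet (branch k '' Ioo (0:ℝ) 1) :=
  measurable_image_of_fderivWithin measurableSet_Ioo
    (fun x hx => (hasDeriv_branch k x hx).hasFDerivWithinAt) (injOn_branch k)

lemma disjoint_branch :
    Pairwise (Function.onFun Disjoint fun k => branch k '' Ioo (0:ℝ) 1) := by
  intro k l hkl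
  rw [Function.onFun, Set.disjoint_left]
  rintro _ ⟨x, hx, rfl⟩ ⟨y, hy, hxy⟩
  have h1 := floor_branch k hx
  have h2 := floor_branch l hy
  rw [hxy] at h2
  omega

/-- The transfer operator preserves the integral, by the change of variables `x = branch k t` on
each cylinder. -/
lemma lintegral_gauss_transfer {f : ℝ → ENNReal} (hf : Measurable f) :
    ∫⁻ x, f x ∂gaussMeasure
      = ∫⁻ x, ∑' k, ENNReal.ofReal (wt k x) * f (branch k x) ∂gaussMeasure := by
  have hm : ∀ k, Measurable fun x => ENNReal.ofReal (wt k x) * f (branch k x) := fun k =>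
    (measurable_wt k).ennreal_ofReal.mul (hf.comp (measurable_branch k))
  rw [lintegral_gauss hf, lintegral_gauss (Measurable.tsum hm),
    ← setLIntegral_congr iUnion_branch]
  have hinj := injOn_branch
  have hder := hasDeriv_branch
  have hmeas := measurableSet_branch
  have hdisj := disjoint_branch
  rw [lintegral_iUnion hmeas hdisj]
  simp_rw [← ENNReal.tsum_mul_left]
  have hm2 : ∀ k, AEMeasurable (fun x => ENNReal.ofReal (1 / (Real.log 2 * (1 + x))) *
      (ENNReal.ofReal (wt k x) * f (branch k x))) (volume.restrict (Ioo (0:ℝ) 1)) := fun k =>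
    Measurable.aemeasurable (Measurable.mul (by fun_prop) (hm k))
  rw [lintegral_tsum hm2]
  refine tsum_congr fun k => ?_
  rw [lintegral_image_eq_lintegral_abs_deriv_mul measurableSet_Ioo (hder k) (hinj k)]
  refine setLIntegral_congr_fun measurableSet_Ioo fun x hx => ?_
  have hx0 := hx.1
  have hl : 0 < Real.log 2 := Real.log_pos (by norm_num)
  rw [← mul_assoc, ← mul_assoc, ← ENNReal.ofReal_mul (abs_nonneg _),
    ← ENNReal.ofReal_mul (by positivity)]
  congr 2
  rw [abs_div, abs_neg, abs_one, abs_of_pos (by positivity)]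
  unfold branch wt
  field_simp
  ring

/-! ### Integration against the Gauss measure -/

instance isProbabilityMeasure_gauss : IsProbabilityMeasure gaussMeasure := by
  have hl : 0 < Real.log 2 := Real.log_pos (by norm_num)
  constructor
  have h1 : ∫ x in (0:ℝ)..1, 1 / (Real.log 2 * (1 + x)) = 1 := by
    have : ∀ x : ℝ, 1 / (Real.log 2 * (1 + x)) = (Real.log 2)⁻¹ * (1 / (1 + x)) := fun x => by
      rw [one_div, mul_inv, one_div]
    simp_rw [this]
    rw [intervalIntegral.integral_const_mul,
      intervalIntegral.integral_comp_add_left (fun x => 1 / x) 1,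
      integral_one_div_of_pos (by norm_num) (by norm_num)]
    norm_num
  have hc : ContinuousOn (fun x : ℝ => 1 / (Real.log 2 * (1 + x))) (Icc 0 1) := by
    refine continuousOn_const.div (by fun_prop) fun x hx => ?_
    have := hx.1
    positivity
  have hi : IntegrableOn (fun x : ℝ => 1 / (Real.log 2 * (1 + x))) (Ioo 0 1) :=
    (hc.integrableOn_compact isCompact_Icc).mono_set Ioo_subset_Icc_self
  have := lintegral_gauss (f := fun _ => 1) measurable_const
  rw [lintegral_one] at this
  rw [this]
  simp only [mul_one]
  rw [← ofReal_integral_eq_lintegral_ofReal hi, ← integral_Ioc_eq_integral_Ioo,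
    ← intervalIntegral.integral_of_le zero_le_one, h1, ENNReal.ofReal_one]
  refine (ae_restrict_iff' measurableSet_Ioo).2 (ae_of_all _ fun x hx => ?_)
  have := hx.1
  simp only [Pi.zero_apply]
  positivity

lemma ae_gauss_mem : ∀ᵐ x ∂gaussMeasure, x ∈ Ioo (0:ℝ) 1 :=
  (withDensity_absolutelyContinuous _ _).ae_le (ae_restrict_mem measurableSet_Ioo)

lemma Good.integrable {f : ℝ → ℝ} (hf : Good f) : Integrable f gaussMeasure := by
  obtain ⟨B, hB⟩ := hf.bdd
  refine Integrable.of_bound hf.meas.aestronglyMeasurable B (ae_of_all _ fun x => ?_)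
  rw [Real.norm_eq_abs, abs_of_nonneg (hf.nonneg x)]
  exact hB x

lemma Good.mul {f g : ℝ → ℝ} (hf : Good f) (hg : Good g) : Good fun x => f x * g x := by
  obtain ⟨B, hB⟩ := hf.bdd
  obtain ⟨B', hB'⟩ := hg.bdd
  exact ⟨hf.meas.mul hg.meas, fun x => mul_nonneg (hf.nonneg x) (hg.nonneg x), B * B', fun x =>
    mul_le_mul (hB x) (hB' x) (hg.nonneg x) ((hf.nonneg x).trans (hB x))⟩

lemma measurable_gaussMap : Measurable gaussMap := by
  unfold gaussMap
  refine Measurable.ite (measurableSet_singleton 0) measurable_const ?_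
  have h : Measurable fun x : ℝ => 1 / x := by fun_prop
  exact h.sub ((measurable_from_top (f := fun n : ℤ => (n : ℝ))).comp (Int.measurable_floor.comp h))

lemma Good.comp {f : ℝ → ℝ} (hf : Good f) (n : ℕ) : Good fun x => f (gaussMap^[n] x) := by
  obtain ⟨B, hB⟩ := hf.bdd
  exact ⟨hf.meas.comp (measurable_gaussMap.iterate n), fun x => hf.nonneg _, B, fun x => hB _⟩

lemma integral_transfer {f : ℝ → ℝ} (hf : Good f) :
    ∫ x, f x ∂gaussMeasure = ∫ x, transfer f x ∂gaussMeasure := by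
  rw [integral_eq_lintegral_of_nonneg_ae (ae_of_all _ hf.nonneg) hf.meas.aestronglyMeasurable,
    integral_eq_lintegral_of_nonneg_ae (ae_of_all _ hf.transfer.nonneg)
      hf.transfer.meas.aestronglyMeasurable,
    lintegral_gauss_transfer hf.meas.ennreal_ofReal]
  congr 1
  refine lintegral_congr_ae ?_
  filter_upwards [ae_gauss_mem] with x hx
  exact (ofReal_transfer hf hx).symm

/-- Duality: the transfer operator is adjoint to composition with the Gauss map. -/
lemma integral_mul_comp {f h : ℝ → ℝ} (hf : Good f) (hh : Good h) :
    ∫ x, f x * h (gaussMap x) ∂gaussMeasure = ∫ x, transfer f x * h x ∂gaussMeasure := by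
  refine (integral_transfer (hf.mul (hh.comp 1))).trans ?_
  refine integral_congr_ae ?_
  filter_upwards [ae_gauss_mem] with x hx
  simp only [transfer, if_pos hx, Function.iterate_one]
  rw [← tsum_mul_right]
  refine tsum_congr fun k => ?_
  rw [gaussMap_branch k hx]
  ring

lemma Good.iterate {f : ℝ → ℝ} (hf : Good f) (n : ℕ) : Good (_root_.transfer^[n] f) := by
  induction n with
  | zero => exact hf
  | succ n ih => rw [Function.iterate_succ_apply']; exact ih.transfer

lemma integral_mul_comp_iterate {f h : ℝ → ℝ} (hf : Good f) (hh : Good h) (n : ℕ) :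
    ∫ x, f x * h (gaussMap^[n] x) ∂gaussMeasure
      = ∫ x, (transfer^[n] f) x * h x ∂gaussMeasure := by
  induction n generalizing f with
  | zero => rfl
  | succ n ih =>
    simp only [Function.iterate_succ_apply]
    rw [integral_mul_comp hf (hh.comp n), ih hf.transfer]

lemma integral_iterate {f : ℝ → ℝ} (hf : Good f) (n : ℕ) :
    ∫ x, (transfer^[n] f) x ∂gaussMeasure = ∫ x, f x ∂gaussMeasure := by
  induction n with
  | zero => rfl
  | succ n ih => rw [Function.iterate_succ_apply', ← integral_transfer (hf.iterate n), ih]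

lemma good_one : Good fun _ => 1 := ⟨measurable_const, fun _ => zero_le_one, 1, fun _ => le_rfl⟩

/-- Invariance of the Gauss measure under the Gauss map. -/
lemma integral_comp {h : ℝ → ℝ} (hh : Good h) (n : ℕ) :
    ∫ x, h (gaussMap^[n] x) ∂gaussMeasure = ∫ x, h x ∂gaussMeasure := by
  induction n with
  | zero => rfl
  | succ n ih =>
    rw [← ih]
    have h1 := integral_mul_comp good_one (hh.comp n)
    simp only [one_mul] at h1
    simp only [Function.iterate_succ_apply]
    rw [h1]
    refine integral_congr_ae ?_
    filter_upwards [ae_gauss_mem] with x hx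
    simp [transfer, if_pos hx, -mem_Ioo, (hasSum_wt hx).tsum_eq]

/-! ### Contraction of the Lipschitz seminorm and decay of correlations -/

/-- Abel summation for the partial sums of the transfer operator. -/
lemma partial_sum_identity (g : ℝ → ℝ) (n : ℕ) {x y : ℝ} (hx : x ∈ Ioo (0:ℝ) 1)
    (hy : y ∈ Ioo (0:ℝ) 1) :
    ∑ k ∈ Finset.range n, wt k y * g (branch k y) - ∑ k ∈ Finset.range n, wt k x * g (branch k x)
      = ∑ k ∈ Finset.range n, (wt k y * (g (branch k y) - g (branch k x))
          + (k + 1) * (y - x) / ((k + 2 + x) * (k + 2 + y))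
            * (g (branch (k + 1) x) - g (branch k x)))
        - n * (y - x) / ((n + 1 + x) * (n + 1 + y)) * g (branch n x) := by
  have h1 := hx.1
  have h2 := hy.1
  induction n with
  | zero => simp
  | succ n ih =>
    rw [Finset.sum_range_succ, Finset.sum_range_succ, Finset.sum_range_succ]
    have e : wt n y - wt n x = n * (y - x) / ((n + 1 + x) * (n + 1 + y))
        - (n + 1) * (y - x) / ((n + 2 + x) * (n + 2 + y)) := by
      unfold wt
      field_simp
      ring
    have e2 : ((n + 1 : ℕ) : ℝ) * (y - x) / (((n + 1 : ℕ) + 1 + x) * ((n + 1 : ℕ) + 1 + y))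
        = (n + 1) * (y - x) / ((n + 2 + x) * (n + 2 + y)) := by
      push_cast
      ring_nf
    rw [e2]
    linear_combination ih + g (branch n x) * e

lemma branch_sub (k : ℕ) {x y : ℝ} (hx : x ∈ Ioo (0:ℝ) 1) (hy : y ∈ Ioo (0:ℝ) 1) :
    branch k y - branch k x = (x - y) / ((k + 1 + x) * (k + 1 + y)) := by
  have h1 := hx.1
  have h2 := hy.1
  unfold branch
  field_simp
  ring

lemma branch_succ_sub (k : ℕ) {x : ℝ} (hx : x ∈ Ioo (0:ℝ) 1) :
    branch (k + 1) x - branch k x = -1 / ((k + 1 + x) * (k + 2 + x)) := by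
  have h1 := hx.1
  unfold branch
  push_cast
  field_simp
  ring

/-- Coefficient of the Lipschitz constant contributed by the `k`-th branch. Summed over `k`, the
right-hand sides telescope to `15/16`, and it is essential that this is less than `1`. -/
lemma coeff_bound (k : ℕ) {x y : ℝ} (hx : x ∈ Ioo (0:ℝ) 1) (hy : y ∈ Ioo (0:ℝ) 1) :
    wt k y / ((k + 1 + x) * (k + 1 + y))
      + (k + 1) / ((k + 2 + x) * (k + 2 + y)) / ((k + 1 + x) * (k + 2 + x))
      ≤ 15 / 4 / ((k + 1) * (k + 2) * (k + 3)) := by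
  have hx1 := hx.1
  have hy1 := hy.1
  have hy2 := hy.2
  have hB : ((k:ℝ) + 1) / ((k + 2 + x) * (k + 2 + y)) / ((k + 1 + x) * (k + 2 + x))
      ≤ 1 / (k + 2) ^ 3 := by
    have : ((k:ℝ) + 1) / ((k + 2) * (k + 2)) / ((k + 1) * (k + 2)) = 1 / (k + 2) ^ 3 := by
      field_simp
    rw [← this]
    gcongr _ / (?_ * ?_) / (?_ * ?_) <;> linarith
  rcases k with _ | k
  · have hA : wt 0 y / ((0 + 1 + x) * (0 + 1 + y)) ≤ 1 / 2 := by
      have : wt 0 y / ((0 + 1 + x) * (0 + 1 + y)) = 1 / ((2 + y) * ((1 + x) * (1 + y))) := by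
        unfold wt
        push_cast
        have : (0:ℝ) + 1 + y ≠ 0 := by positivity
        field_simp
        ring
      rw [this]
      apply one_div_le_one_div_of_le (by norm_num)
      nlinarith [mul_pos hx1 hy1, mul_pos (mul_pos hx1 hy1) hy1, mul_pos hy1 hy1]
    norm_num at hA hB ⊢
    linarith
  · have hA : wt (k + 1) y / (((k + 1 : ℕ) + 1 + x) * ((k + 1 : ℕ) + 1 + y))
        ≤ 2 / ((k + 2) ^ 3 * (k + 4)) := by
      unfold wt
      push_cast
      have hq : (1 + y) / (k + 1 + 2 + y) ≤ 2 / ((k:ℝ) + 4) := by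
        rw [div_le_div_iff₀ (by positivity) (by positivity)]
        nlinarith [k.cast_nonneg (α := ℝ)]
      have : (1 + y) / ((k + 1 + 1 + y) * (k + 1 + 2 + y)) / (((k:ℝ) + 1 + 1 + x) * (k + 1 + 1 + y))
          = (1 + y) / (k + 1 + 2 + y) / ((k + 1 + 1 + y) * ((k + 1 + 1 + x) * (k + 1 + 1 + y))) := by
        field_simp
      rw [this]
      have e : 2 / (((k:ℝ) + 2) ^ 3 * (k + 4)) = 2 / ((k:ℝ) + 4) / ((k + 2) * ((k + 2) * (k + 2))) := by
        field_simp
      rw [e]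
      gcongr ?_ / (?_ * (?_ * ?_)) <;> linarith
    refine (add_le_add hA hB).trans ?_
    push_cast
    rw [div_add_div _ _ (by positivity) (by positivity),
      div_le_div_iff₀ (by positivity) (by positivity), ← sub_nonneg]
    ring_nf
    positivity

lemma sum_telescope (n : ℕ) :
    ∑ k ∈ Finset.range n, 15 / 4 / (((k:ℝ) + 1) * (k + 2) * (k + 3)) ≤ 15 / 16 := by
  have : ∑ k ∈ Finset.range n, 15 / 4 / (((k:ℝ) + 1) * (k + 2) * (k + 3))
      = 15 / 16 - 15 / 8 / ((n + 1) * (n + 2)) := by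
    induction n with
    | zero => norm_num
    | succ n ih =>
      rw [Finset.sum_range_succ, ih]
      push_cast
      field_simp
      ring
  rw [this]
  have : 0 ≤ 15 / 8 / (((n:ℝ) + 1) * (n + 2)) := by positivity
  linarith

/-- The transfer operator contracts the Lipschitz seminorm on `(0,1)` by the factor `15/16`
(an argument of Szüsz). -/
lemma transfer_lipschitz {g : ℝ → ℝ} (hg : Good g) {K : ℝ} (hK : 0 ≤ K)
    (hL : ∀ x ∈ Ioo (0:ℝ) 1, ∀ y ∈ Ioo (0:ℝ) 1, |g y - g x| ≤ K * |y - x|) :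
    ∀ x ∈ Ioo (0:ℝ) 1, ∀ y ∈ Ioo (0:ℝ) 1,
      |transfer g y - transfer g x| ≤ 15 / 16 * K * |y - x| := by
  intro x hx y hy
  obtain ⟨B, hB⟩ := hg.bdd
  have hx1 := hx.1
  have hy1 := hy.1
  have hxs := (summable_transfer hg hx).hasSum.tendsto_sum_nat
  have hys := (summable_transfer hg hy).hasSum.tendsto_sum_nat
  have hlim := (hys.sub hxs).abs
  rw [transfer, if_pos hy, transfer, if_pos hx]
  have hr : Tendsto (fun n : ℕ => 15 / 16 * K * |y - x| + 1 / ((n:ℝ) + 1) * (|y - x| * B)) atTop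
      (nhds (15 / 16 * K * |y - x|)) := by
    have := (tendsto_one_div_add_atTop_nhds_zero_nat (𝕜 := ℝ)).mul_const (|y - x| * B)
    simpa using this.const_add (15 / 16 * K * |y - x|)
  refine le_of_tendsto_of_tendsto' hlim hr fun n => ?_
  rw [partial_sum_identity g n hx hy]
  refine (abs_sub _ _).trans (add_le_add ?_ ?_)
  · refine (Finset.abs_sum_le_sum_abs _ _).trans ?_
    have : ∀ k ∈ Finset.range n, |wt k y * (g (branch k y) - g (branch k x))
          + (k + 1) * (y - x) / ((k + 2 + x) * (k + 2 + y))
            * (g (branch (k + 1) x) - g (branch k x))|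
        ≤ 15 / 4 / (((k:ℝ) + 1) * (k + 2) * (k + 3)) * (K * |y - x|) := by
      intro k _
      refine le_trans ?_ (mul_le_mul_of_nonneg_right (coeff_bound k hx hy) (by positivity))
      have a1 := hL _ (branch_mem k hx) _ (branch_mem k hy)
      have a2 := hL _ (branch_mem k hx) _ (branch_mem (k + 1) hx)
      rw [branch_sub k hx hy, abs_div, abs_sub_comm x y,
        abs_of_pos (a := ((k:ℝ) + 1 + x) * (k + 1 + y)) (by positivity)] at a1
      rw [branch_succ_sub k hx, abs_div, abs_neg, abs_one,
        abs_of_pos (a := ((k:ℝ) + 1 + x) * (k + 2 + x)) (by positivity)] at a2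
      refine (abs_add_le _ _).trans ?_
      rw [abs_mul, abs_mul, abs_div, abs_mul, abs_of_nonneg (wt_nonneg k hy),
        abs_of_pos (a := (k:ℝ) + 1) (by positivity),
        abs_of_pos (a := ((k:ℝ) + 2 + x) * (k + 2 + y)) (by positivity),
        add_mul (wt k y / _)]
      refine add_le_add ((mul_le_mul_of_nonneg_left a1 (wt_nonneg k hy)).trans_eq ?_)
        ((mul_le_mul_of_nonneg_left a2 (by positivity)).trans_eq ?_)
      · ring
      · ring
    refine (Finset.sum_le_sum this).trans ?_
    rw [← Finset.sum_mul, mul_assoc]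
    exact mul_le_mul_of_nonneg_right (sum_telescope n) (by positivity)
  · rw [abs_mul, abs_div, abs_mul, abs_of_nonneg (hg.nonneg _),
      abs_of_nonneg (n.cast_nonneg (α := ℝ)),
      abs_of_pos (a := ((n:ℝ) + 1 + x) * (n + 1 + y)) (by positivity)]
    have h3 : (n:ℝ) / ((n + 1 + x) * (n + 1 + y)) ≤ 1 / (n + 1) := by
      rw [div_le_div_iff₀ (by positivity) (by positivity)]
      nlinarith [n.cast_nonneg (α := ℝ), mul_pos hx1 hy1]
    calc (n:ℝ) * |y - x| / ((n + 1 + x) * (n + 1 + y)) * g (branch n x)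
        = (n:ℝ) / ((n + 1 + x) * (n + 1 + y)) * (|y - x| * g (branch n x)) := by ring
      _ ≤ 1 / (n + 1) * (|y - x| * B) := by
        have := hg.nonneg (branch n x)
        have := hB (branch n x)
        gcongr

lemma transfer_iterate_lipschitz {g : ℝ → ℝ} (hg : Good g) {K : ℝ} (hK : 0 ≤ K)
    (hL : ∀ x ∈ Ioo (0:ℝ) 1, ∀ y ∈ Ioo (0:ℝ) 1, |g y - g x| ≤ K * |y - x|) (n : ℕ) :
    ∀ x ∈ Ioo (0:ℝ) 1, ∀ y ∈ Ioo (0:ℝ) 1,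
      |(transfer^[n] g) y - (transfer^[n] g) x| ≤ (15 / 16) ^ n * K * |y - x| := by
  induction n with
  | zero => simpa using hL
  | succ n ih =>
    rw [Function.iterate_succ_apply', pow_succ', mul_assoc (15 / 16 : ℝ)]
    exact transfer_lipschitz (hg.iterate n) (by positivity) ih

/-- A nonnegative function close to constant in relative terms is comparable to its mean. -/
lemma le_mean {g : ℝ → ℝ} (hg : Good g) {c : ℝ} (hc : 0 ≤ c)
    (hD : ∀ x ∈ Ioo (0:ℝ) 1, ∀ y ∈ Ioo (0:ℝ) 1, |g y - g x| ≤ c * |y - x| * g x) :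
    ∀ y ∈ Ioo (0:ℝ) 1, g y ≤ (1 + c) * ∫ x, g x ∂gaussMeasure := by
  intro y hy
  rw [← integral_const_mul]
  have : g y = ∫ _, g y ∂gaussMeasure := by simp
  rw [this]
  refine integral_mono_ae (integrable_const _) (hg.integrable.const_mul _) ?_
  filter_upwards [ae_gauss_mem] with x hx
  have h1 := (abs_le.1 (hD x hx y hy)).2
  have h2 : |y - x| ≤ 1 := abs_le.2 ⟨by linarith [hx.2, hy.1], by linarith [hx.1, hy.2]⟩
  have h3 : c * |y - x| * g x ≤ c * 1 * g x :=
    mul_le_mul_of_nonneg_right (mul_le_mul_of_nonneg_left h2 hc) (hg.nonneg x)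
  linarith

/-- Exponential decay of correlations. A relative Lipschitz bound on `transfer^[2] f` turns into an
absolute one proportional to the mean of `f`, so that the error keeps both means as factors. -/
lemma cov_bound {f h : ℝ → ℝ} (hf : Good f) (hh : Good h)
    {c : ℝ} (hc : 0 ≤ c)
    (hD : ∀ x ∈ Ioo (0:ℝ) 1, ∀ y ∈ Ioo (0:ℝ) 1,
      |(transfer^[2] f) y - (transfer^[2] f) x| ≤ c * |y - x| * (transfer^[2] f) x) (n : ℕ) :
    ∫ x, f x * h (gaussMap^[n + 2] x) ∂gaussMeasure
        - (∫ x, f x ∂gaussMeasure) * ∫ x, h x ∂gaussMeasure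
      ≤ (15 / 16) ^ n * (c * (1 + c)) * (∫ x, f x ∂gaussMeasure) * ∫ x, h x ∂gaussMeasure := by
  have hG := hf.iterate 2
  set e := ∫ x, f x ∂gaussMeasure with he
  have he0 : 0 ≤ e := integral_nonneg hf.nonneg
  have hle := le_mean hG hc hD
  rw [integral_iterate hf 2] at hle
  have hL : ∀ x ∈ Ioo (0:ℝ) 1, ∀ y ∈ Ioo (0:ℝ) 1,
      |(transfer^[2] f) y - (transfer^[2] f) x| ≤ (c * (1 + c) * e) * |y - x| := by
    intro x hx y hy
    refine (hD x hx y hy).trans ?_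
    calc c * |y - x| * (transfer^[2] f) x ≤ c * |y - x| * ((1 + c) * e) := by
          gcongr
          exact hle x hx
      _ = _ := by ring
  have hLn := transfer_iterate_lipschitz hG (by positivity) hL n
  simp only [← Function.iterate_add_apply] at hLn
  have hGn := hf.iterate (n + 2)
  set G := transfer^[n + 2] f
  have hGe : ∫ x, G x ∂gaussMeasure = e := integral_iterate hf (n + 2)
  -- the oscillation of `G` on `(0,1)` bounds its deviation from the mean
  have hdev : ∀ y ∈ Ioo (0:ℝ) 1, G y ≤ e + (15 / 16) ^ n * (c * (1 + c) * e) := by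
    intro y hy
    have h1 : ∫ x, (G x + (15 / 16) ^ n * (c * (1 + c) * e)) ∂gaussMeasure
        = e + (15 / 16) ^ n * (c * (1 + c) * e) := by
      rw [integral_add hGn.integrable (integrable_const _), hGe]
      simp
    have h2 : G y = ∫ _, G y ∂gaussMeasure := by simp
    rw [← h1, h2]
    refine integral_mono_ae (integrable_const _) (hGn.integrable.add (integrable_const _)) ?_
    filter_upwards [ae_gauss_mem] with x hx
    have h1 := (abs_le.1 (hLn x hx y hy)).2
    have h2 : |y - x| ≤ 1 := abs_le.2 ⟨by linarith [hx.2, hy.1], by linarith [hx.1, hy.2]⟩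
    have h3 : (15 / 16) ^ n * (c * (1 + c) * e) * |y - x| ≤ (15 / 16) ^ n * (c * (1 + c) * e) * 1 :=
      mul_le_mul_of_nonneg_left h2 (by positivity)
    linarith
  rw [integral_mul_comp_iterate hf hh]
  have h4 : ∫ x, G x * h x ∂gaussMeasure
      ≤ ∫ x, (e + (15 / 16) ^ n * (c * (1 + c) * e)) * h x ∂gaussMeasure := by
    refine integral_mono_ae (hGn.mul hh).integrable (hh.integrable.const_mul _) ?_
    filter_upwards [ae_gauss_mem] with x hx
    exact mul_le_mul_of_nonneg_right (hdev x hx) (hh.nonneg x)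
  rw [integral_const_mul] at h4
  linarith

/-! ### Rank-two cylinders and bounded distortion -/

/-- The weight of the rank-two cylinder `a₁ = j + 1`, `a₂ = k + 1` in `transfer^[2]`. -/
noncomputable def wt2 (j k : ℕ) (x : ℝ) : ℝ :=
  (1 + x) * ((((j:ℝ) + 1) * (k + 1 + x) + 1)⁻¹ * (((j:ℝ) + 2) * (k + 1 + x) + 1)⁻¹)

lemma wt_mul_wt (j k : ℕ) {x : ℝ} (hx : x ∈ Ioo (0:ℝ) 1) :
    wt k x * wt j (branch k x) = wt2 j k x := by
  have := hx.1
  unfold wt2 wt branch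
  field_simp
  ring

lemma wt2_nonneg (j k : ℕ) {x : ℝ} (hx : x ∈ Ioo (0:ℝ) 1) : 0 ≤ wt2 j k x := by
  have := hx.1
  unfold wt2
  positivity

lemma wt2_le (j k : ℕ) {x : ℝ} (hx : x ∈ Ioo (0:ℝ) 1) :
    wt2 j k x ≤ 2 / (((j:ℝ) + 1) * (k + 1)) ^ 2 := by
  have h1 := hx.1
  have h2 := hx.2
  have e : 2 / (((j:ℝ) + 1) * (k + 1)) ^ 2
      = 2 * ((((j:ℝ) + 1) * (k + 1))⁻¹ * (((j:ℝ) + 1) * (k + 1))⁻¹) := by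
    rw [div_eq_mul_inv, sq, mul_inv (((j:ℝ) + 1) * (k + 1))]
  rw [e]
  unfold wt2
  have p : 0 ≤ ((j:ℝ) + 1) * x := by positivity
  have hj : (0:ℝ) ≤ j := j.cast_nonneg
  have hk : (0:ℝ) ≤ k := k.cast_nonneg
  gcongr ?_ * (?_⁻¹ * ?_⁻¹)
  · linarith
  · nlinarith
  · nlinarith

/-- The reciprocal of an affine function `x ↦ a (k + 1 + x) + 1`, `a ≥ 0`, has relative variation at most
`|y - x|`. -/
lemma inv_distortion {a : ℝ} (ha : 0 ≤ a) (k : ℕ) {x y : ℝ} (hx : x ∈ Ioo (0:ℝ) 1)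
    (hy : y ∈ Ioo (0:ℝ) 1) :
    |(a * (k + 1 + y) + 1)⁻¹ - (a * (k + 1 + x) + 1)⁻¹|
      ≤ 1 * |y - x| * (a * (k + 1 + x) + 1)⁻¹ := by
  have h1 := hx.1
  have h2 := hy.1
  have hP : 0 < a * (k + 1 + y) + 1 := by positivity
  have hQ : 0 < a * (k + 1 + x) + 1 := by positivity
  rw [inv_sub_inv hP.ne' hQ.ne', abs_div, abs_of_pos (mul_pos hP hQ)]
  have e : a * (k + 1 + x) + 1 - (a * (k + 1 + y) + 1) = - (a * (y - x)) := by ring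
  rw [e, abs_neg, abs_mul, abs_of_nonneg ha, div_le_iff₀ (mul_pos hP hQ)]
  have : 1 * |y - x| * (a * (k + 1 + x) + 1)⁻¹ * ((a * (k + 1 + y) + 1) * (a * (k + 1 + x) + 1))
      = (a * (k + 1 + y) + 1) * |y - x| := by
    field_simp
  rw [this]
  refine mul_le_mul_of_nonneg_right ?_ (abs_nonneg _)
  have : (0:ℝ) ≤ k := k.cast_nonneg
  nlinarith

lemma mul_distortion {u v u' v' d c c' : ℝ} (hu : 0 ≤ u) (hv : 0 ≤ v) (hd : 0 ≤ d) (hd1 : d ≤ 1)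
    (hc : 0 ≤ c) (hc' : 0 ≤ c')
    (h : |u' - u| ≤ c * d * u) (h' : |v' - v| ≤ c' * d * v) :
    |u' * v' - u * v| ≤ (c + c' + c * c') * d * (u * v) := by
  have e : u' * v' - u * v = (u' - u) * (v' - v) + (u' - u) * v + u * (v' - v) := by ring
  rw [e]
  refine (abs_add_three _ _ _).trans ?_
  rw [abs_mul, abs_mul, abs_mul, abs_of_nonneg hu, abs_of_nonneg hv]
  have h1 : |u' - u| * |v' - v| ≤ (c * d * u) * (c' * d * v) :=
    mul_le_mul h h' (abs_nonneg _) (by positivity)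
  have h2 : |u' - u| * v ≤ c * d * u * v := mul_le_mul_of_nonneg_right h hv
  have h3 : u * |v' - v| ≤ u * (c' * d * v) := mul_le_mul_of_nonneg_left h' hu
  have h4 : (c * d * u) * (c' * d * v) ≤ c * c' * d * (u * v) := by
    have : 0 ≤ c * c' * d * (u * v) := by positivity
    calc (c * d * u) * (c' * d * v) = c * c' * d * (u * v) * d := by ring
      _ ≤ c * c' * d * (u * v) * 1 := mul_le_mul_of_nonneg_left hd1 this
      _ = _ := mul_one _
  linarith

/-- Bounded distortion of the rank-two weights. -/
lemma wt2_distortion (j k : ℕ) {x y : ℝ} (hx : x ∈ Ioo (0:ℝ) 1) (hy : y ∈ Ioo (0:ℝ) 1) :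
    |wt2 j k y - wt2 j k x| ≤ 7 * |y - x| * wt2 j k x := by
  have h1 := hx.1
  have h2 := hy.1
  have hd : |y - x| ≤ 1 := abs_le.2 ⟨by linarith [hx.2], by linarith [hy.2]⟩
  have hA : |(1 + y) - (1 + x)| ≤ 1 * |y - x| * (1 + x) := by
    rw [add_sub_add_left_eq_sub]
    nlinarith [abs_nonneg (y - x)]
  have hB := mul_distortion (by positivity) (by positivity) (abs_nonneg (y - x)) hd zero_le_one
    zero_le_one (inv_distortion (a := (j:ℝ) + 1) (by positivity) k hx hy)
    (inv_distortion (a := (j:ℝ) + 2) (by positivity) k hx hy)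
  have hC := mul_distortion (by positivity) (by positivity) (abs_nonneg (y - x)) hd zero_le_one
    (by norm_num) hA hB
  norm_num at hC
  exact hC

/-- The function `F(a₁, a₂)` of the first two partial quotients. -/
noncomputable def cyl (F : ℕ → ℕ → ℝ) (x : ℝ) : ℝ := F ⌊1 / x⌋₊ ⌊1 / gaussMap x⌋₊

lemma cyl_branch (F : ℕ → ℕ → ℝ) (j k : ℕ) {x : ℝ} (hx : x ∈ Ioo (0:ℝ) 1) :
    cyl F (branch j (branch k x)) = F (j + 1) (k + 1) := by
  unfold cyl
  rw [gaussMap_branch j (branch_mem k hx), floor_branch j (branch_mem k hx), floor_branch k hx]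

/-- For `F` supported in `[0,m]²` the function `transfer^[2] (cyl F)` is a finite combination of
the rank-two weights. -/
lemma transfer2_cyl {F : ℕ → ℕ → ℝ} {m : ℕ} (hF : ∀ a b, m < a ∨ m < b → F a b = 0)
    {x : ℝ} (hx : x ∈ Ioo (0:ℝ) 1) :
    (transfer^[2] (cyl F)) x
      = ∑ k ∈ Finset.range m, ∑ j ∈ Finset.range m, wt2 j k x * F (j + 1) (k + 1) := by
  have h1 : ∀ k, transfer (cyl F) (branch k x)
      = ∑' j, wt j (branch k x) * F (j + 1) (k + 1) := by
    intro k
    rw [transfer, if_pos (branch_mem k hx)]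
    exact tsum_congr fun j => by rw [cyl_branch F j k hx]
  change transfer (transfer (cyl F)) x = _
  rw [transfer, if_pos hx]
  simp_rw [h1]
  rw [tsum_eq_sum (s := Finset.range m)]
  · refine Finset.sum_congr rfl fun k _ => ?_
    rw [tsum_eq_sum (s := Finset.range m), Finset.mul_sum]
    · refine Finset.sum_congr rfl fun j _ => ?_
      rw [← mul_assoc, wt_mul_wt j k hx]
    · intro j hj
      rw [hF _ _ (Or.inl (by simpa [Nat.lt_succ_iff] using hj)), mul_zero]
  · intro k hk
    have : ∀ j, F (j + 1) (k + 1) = 0 := fun j =>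
      hF _ _ (Or.inr (by simpa [Nat.lt_succ_iff] using hk))
    simp [this]

lemma transfer2_cyl_distortion {F : ℕ → ℕ → ℝ} {m : ℕ} (h0 : ∀ a b, 0 ≤ F a b)
    (hF : ∀ a b, m < a ∨ m < b → F a b = 0) :
    ∀ x ∈ Ioo (0:ℝ) 1, ∀ y ∈ Ioo (0:ℝ) 1,
      |(transfer^[2] (cyl F)) y - (transfer^[2] (cyl F)) x|
        ≤ 7 * |y - x| * (transfer^[2] (cyl F)) x := by
  intro x hx y hy
  rw [transfer2_cyl hF hx, transfer2_cyl hF hy, ← Finset.sum_sub_distrib, Finset.mul_sum]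
  refine (Finset.abs_sum_le_sum_abs _ _).trans (Finset.sum_le_sum fun k _ => ?_)
  rw [← Finset.sum_sub_distrib, Finset.mul_sum]
  refine (Finset.abs_sum_le_sum_abs _ _).trans (Finset.sum_le_sum fun j _ => ?_)
  rw [← sub_mul, abs_mul, abs_of_nonneg (h0 _ _), ← mul_assoc]
  exact mul_le_mul_of_nonneg_right (wt2_distortion j k hx hy) (h0 _ _)

/-! ### The truncated product and its second moment -/

/-- The product `a b` truncated at level `M`. -/
noncomputable def trunc (M : ℝ) (a b : ℕ) : ℝ :=
  if ((a * b : ℕ) : ℝ) ≤ M then ((a * b : ℕ) : ℝ) else 0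

lemma trunc_nonneg (M : ℝ) (a b : ℕ) : 0 ≤ trunc M a b := by
  unfold trunc; split_ifs <;> positivity

lemma trunc_eq_zero {M : ℝ} {a b : ℕ} (h : ⌊M⌋₊ < a ∨ ⌊M⌋₊ < b) : trunc M a b = 0 := by
  unfold trunc
  split_ifs with h1
  · by_contra hne
    have hne' : a * b ≠ 0 := by exact_mod_cast hne
    have h2 : a * b ≤ ⌊M⌋₊ := Nat.le_floor h1
    have ha : 0 < a := Nat.pos_of_ne_zero fun h => hne' (by simp [h])
    have hb : 0 < b := Nat.pos_of_ne_zero fun h => hne' (by simp [h])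
    rcases h with h | h <;> nlinarith
  · rfl

lemma measurable_cyl (F : ℕ → ℕ → ℝ) : Measurable (cyl F) := by
  have h : Measurable fun x : ℝ => ⌊1 / x⌋₊ := Nat.measurable_floor.comp (by fun_prop)
  have h2 : Measurable fun x : ℝ => (⌊1 / x⌋₊, ⌊1 / gaussMap x⌋₊) :=
    h.prodMk (h.comp measurable_gaussMap)
  exact (Measurable.of_discrete (f := fun p : ℕ × ℕ => F p.1 p.2)).comp h2

lemma good_cyl_trunc {M : ℝ} (hM : 0 ≤ M) : Good (cyl (trunc M)) := by
  refine ⟨measurable_cyl _, fun x => trunc_nonneg _ _ _, M, fun x => ?_⟩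
  unfold cyl trunc
  split_ifs with h
  · exact h
  · exact hM

/-- Counting the pairs with `(j+1)(k+1) ≤ M`. -/
lemma count_le {M : ℝ} (hM : 0 ≤ M) :
    ∑ k ∈ Finset.range ⌊M⌋₊, ∑ j ∈ Finset.range ⌊M⌋₊,
      (if (((j + 1) * (k + 1) : ℕ) : ℝ) ≤ M then (1:ℝ) else 0)
      ≤ M * harmonic ⌊M⌋₊ := by
  rw [harmonic]
  push_cast
  rw [Finset.mul_sum]
  refine Finset.sum_le_sum fun k _ => ?_
  rw [Finset.sum_ite, Finset.sum_const_zero, add_zero, Finset.sum_const, nsmul_eq_mul, mul_one]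
  have hk : (0:ℝ) < k + 1 := by positivity
  have h1 : (Finset.range ⌊M⌋₊).filter (fun j => (((j + 1) * (k + 1) : ℕ) : ℝ) ≤ M)
      ⊆ Finset.range ⌊M / (k + 1)⌋₊ := by
    intro j hj
    rw [Finset.mem_filter] at hj
    rw [Finset.mem_range, ← Nat.succ_le_iff]
    refine Nat.le_floor ?_
    rw [le_div_iff₀ hk]
    exact_mod_cast hj.2
  have h2 := Finset.card_le_card h1
  rw [Finset.card_range] at h2
  calc _ ≤ ((⌊M / (k + 1)⌋₊ : ℕ) : ℝ) := by exact_mod_cast h2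
    _ ≤ M / (k + 1) := Nat.floor_le (by positivity)
    _ = _ := by rw [div_eq_mul_inv]

lemma second_moment {M : ℝ} (hM : 0 ≤ M) :
    ∫ x, cyl (trunc M) x * cyl (trunc M) x ∂gaussMeasure ≤ 2 * (M * harmonic ⌊M⌋₊) := by
  have hg := good_cyl_trunc hM
  have e : (fun x => cyl (trunc M) x * cyl (trunc M) x)
      = cyl (fun a b => trunc M a b * trunc M a b) := rfl
  have hgg : Good (cyl (fun a b => trunc M a b * trunc M a b)) := e ▸ hg.mul hg
  rw [e, ← integral_iterate hgg 2]
  have : 2 * (M * harmonic ⌊M⌋₊) = ∫ _ : ℝ, 2 * (M * (harmonic ⌊M⌋₊ : ℝ)) ∂gaussMeasure := by simp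
  rw [this]
  refine integral_mono_ae (hgg.iterate 2).integrable (integrable_const _) ?_
  filter_upwards [ae_gauss_mem] with x hx
  rw [transfer2_cyl (m := ⌊M⌋₊) (fun a b h => by rw [trunc_eq_zero h, zero_mul]) hx]
  refine le_trans ?_ (mul_le_mul_of_nonneg_left (count_le hM) zero_le_two)
  rw [Finset.mul_sum]
  refine Finset.sum_le_sum fun k _ => ?_
  rw [Finset.mul_sum]
  refine Finset.sum_le_sum fun j _ => ?_
  unfold trunc
  split_ifs with h
  · refine (mul_le_mul_of_nonneg_right (wt2_le j k hx) (by positivity)).trans_eq ?_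
    push_cast
    field_simp
  · simp

lemma Good.sq_mean_le {f : ℝ → ℝ} (hf : Good f) :
    (∫ x, f x ∂gaussMeasure) * (∫ x, f x ∂gaussMeasure) ≤ ∫ x, f x * f x ∂gaussMeasure := by
  set e := ∫ x, f x ∂gaussMeasure with he
  have h : 0 ≤ ∫ x, (f x - e) ^ 2 ∂gaussMeasure := integral_nonneg fun x => sq_nonneg _
  have h2 : ∫ x, (f x - e) ^ 2 ∂gaussMeasure
      = ∫ x, f x * f x ∂gaussMeasure - 2 * e * e + e ^ 2 := by
    have : ∀ x, (f x - e) ^ 2 = f x * f x - 2 * e * f x + e ^ 2 := fun x => by ring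
    simp_rw [this]
    have hi : Integrable (fun x => f x * f x - 2 * e * f x) gaussMeasure :=
      (hf.mul hf).integrable.sub (hf.integrable.const_mul _)
    rw [integral_add hi (integrable_const _),
      integral_sub (hf.mul hf).integrable (hf.integrable.const_mul _), integral_const_mul,
      ← he]
    simp
  nlinarith

lemma cov_bound_trunc {M : ℝ} (hM : 0 ≤ M) (n : ℕ) :
    ∫ x, cyl (trunc M) x * cyl (trunc M) (gaussMap^[n] x) ∂gaussMeasure
        - (∫ x, cyl (trunc M) x ∂gaussMeasure) * ∫ x, cyl (trunc M) x ∂gaussMeasure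
      ≤ 64 * (∫ x, cyl (trunc M) x * cyl (trunc M) x ∂gaussMeasure) * (15 / 16) ^ n := by
  have hg := good_cyl_trunc hM
  have hsq := hg.sq_mean_le
  have hcov := cov_bound hg hg (by norm_num : (0:ℝ) ≤ 7)
    (transfer2_cyl_distortion (trunc_nonneg M) (fun a b h => trunc_eq_zero h))
  set f := cyl (trunc M)
  set e := ∫ x, f x ∂gaussMeasure
  set V := ∫ x, f x * f x ∂gaussMeasure with hV
  have he : 0 ≤ e := integral_nonneg hg.nonneg
  have hV0 : 0 ≤ V := integral_nonneg (hg.mul hg).nonneg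
  -- the nearest lags are handled by Cauchy-Schwarz and invariance
  have h1 : ∫ x, f x * f (gaussMap^[n] x) ∂gaussMeasure ≤ V := by
    have hc := hg.comp n
    have h2 : ∫ x, f x * f (gaussMap^[n] x) ∂gaussMeasure
        ≤ ∫ x, (1 / 2 * (f x * f x)
          + 1 / 2 * (f (gaussMap^[n] x) * f (gaussMap^[n] x))) ∂gaussMeasure := by
      refine integral_mono (hg.mul hc).integrable
        (((hg.mul hg).integrable.const_mul _).add ((hc.mul hc).integrable.const_mul _)) fun x => ?_
      simp only
      nlinarith [sq_nonneg (f x - f (gaussMap^[n] x))]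
    rw [integral_add ((hg.mul hg).integrable.const_mul _) ((hc.mul hc).integrable.const_mul _),
      integral_const_mul, integral_const_mul, integral_comp (hg.mul hg) n] at h2
    linarith
  rcases n with _ | _ | n
  · rw [pow_zero]
    nlinarith [mul_nonneg he he]
  · rw [zero_add, pow_one]
    rw [zero_add] at h1
    nlinarith [mul_nonneg he he]
  · have hq : (0:ℝ) ≤ (15 / 16) ^ n := by positivity
    calc _ ≤ (15 / 16) ^ n * (7 * (1 + 7)) * e * e := hcov n
      _ = (15 / 16) ^ n * 56 * (e * e) := by ring
      _ ≤ (15 / 16) ^ n * 56 * V := by gcongr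
      _ ≤ 64 * V * (15 / 16) ^ (n + 2) := by
        rw [pow_add]
        nlinarith [mul_nonneg hq hV0]

/-! ### Summing the covariances -/

lemma geom_sum_le_sixteen (n : ℕ) : ∑ j ∈ Finset.range n, (15 / 16 : ℝ) ^ j ≤ 16 := by
  rw [geom_sum_eq (by norm_num)]
  have : (0:ℝ) ≤ (15 / 16) ^ n := by positivity
  rw [div_le_iff_of_neg (by norm_num)]
  linarith

lemma two_sided_geom_le {i N : ℕ} (hi : i < N) :
    ∑ l ∈ Finset.range N, (15 / 16 : ℝ) ^ (i - l + (l - i)) ≤ 32 := by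
  rw [← Finset.sum_range_add_sum_Ico _ hi.le]
  have h1 : ∑ l ∈ Finset.range i, (15 / 16 : ℝ) ^ (i - l + (l - i)) ≤ 16 := by
    rw [← Finset.sum_range_reflect]
    refine le_trans (Finset.sum_le_sum fun j hj => ?_) (geom_sum_le_sixteen i)
    rw [Finset.mem_range] at hj
    exact pow_le_pow_of_le_one (by norm_num) (by norm_num) (by omega)
  have h2 : ∑ l ∈ Finset.Ico i N, (15 / 16 : ℝ) ^ (i - l + (l - i)) ≤ 16 := by
    rw [Finset.sum_Ico_eq_sum_range]
    refine le_trans (Finset.sum_le_sum fun j hj => ?_) (geom_sum_le_sixteen (N - i))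
    exact pow_le_pow_of_le_one (by norm_num) (by norm_num) (by omega)
  linarith

/-- By stationarity, the covariance of two terms depends only on their lag. -/
lemma cov_terms {M : ℝ} (hM : 0 ≤ M) (i l : ℕ) :
    ∫ x, cyl (trunc M) (gaussMap^[i] x) * cyl (trunc M) (gaussMap^[l] x) ∂gaussMeasure
      ≤ (∫ x, cyl (trunc M) x ∂gaussMeasure) * (∫ x, cyl (trunc M) x ∂gaussMeasure)
        + 64 * (∫ x, cyl (trunc M) x * cyl (trunc M) x ∂gaussMeasure)
          * (15 / 16) ^ (i - l + (l - i)) := by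
  have hg := good_cyl_trunc hM
  wlog h : i ≤ l generalizing i l
  · have := this l i (by omega)
    rw [add_comm (i - l)]
    simpa only [mul_comm (cyl (trunc M) (gaussMap^[l] _))] using this
  · obtain ⟨n, rfl⟩ := Nat.exists_eq_add_of_le h
    have h1 := cov_bound_trunc hM n
    rw [← integral_comp (hg.mul (hg.comp n)) i] at h1
    simp only [← Function.iterate_add_apply] at h1
    have e : i - (i + n) + (i + n - i) = n := by omega
    rw [e, add_comm i n]
    linarith

lemma variance_le {M : ℝ} (hM : 0 ≤ M) (N : ℕ) :
    ∫ x, (∑ i ∈ Finset.range N, cyl (trunc M) (gaussMap^[i] x)) ^ 2 ∂gaussMeasure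
      - (∫ x, (∑ i ∈ Finset.range N, cyl (trunc M) (gaussMap^[i] x)) ∂gaussMeasure) ^ 2
      ≤ N * 32 * (64 * ∫ x, cyl (trunc M) x * cyl (trunc M) x ∂gaussMeasure) := by
  have hg := good_cyl_trunc hM
  have hct := cov_terms hM
  have hV0 : 0 ≤ ∫ x, cyl (trunc M) x * cyl (trunc M) x ∂gaussMeasure :=
    integral_nonneg (hg.mul hg).nonneg
  have hmean : ∫ x, (∑ i ∈ Finset.range N, cyl (trunc M) (gaussMap^[i] x)) ∂gaussMeasure
      = N * ∫ x, cyl (trunc M) x ∂gaussMeasure := by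
    rw [integral_finsetSum _ fun i _ => (hg.comp i).integrable]
    simp_rw [integral_comp hg]
    simp
  have hsq : ∫ x, (∑ i ∈ Finset.range N, cyl (trunc M) (gaussMap^[i] x)) ^ 2 ∂gaussMeasure
      = ∑ i ∈ Finset.range N, ∑ l ∈ Finset.range N,
        ∫ x, cyl (trunc M) (gaussMap^[i] x) * cyl (trunc M) (gaussMap^[l] x) ∂gaussMeasure := by
    simp_rw [sq, Finset.sum_mul_sum]
    rw [integral_finsetSum _ fun i _ => integrable_finsetSum _ fun l _ =>
      ((hg.comp i).mul (hg.comp l)).integrable]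
    refine Finset.sum_congr rfl fun i _ => ?_
    rw [integral_finsetSum _ fun l _ => ((hg.comp i).mul (hg.comp l)).integrable]
  rw [hmean, hsq]
  generalize (∫ x, cyl (trunc M) x ∂gaussMeasure) = e at *
  generalize (∫ x, cyl (trunc M) x * cyl (trunc M) x ∂gaussMeasure) = V at *
  have hrow : ∀ i ∈ Finset.range N, ∑ l ∈ Finset.range N,
        ∫ x, cyl (trunc M) (gaussMap^[i] x) * cyl (trunc M) (gaussMap^[l] x) ∂gaussMeasure
      ≤ N * (e * e) + 64 * V * 32 := by
    intro i hi
    refine (Finset.sum_le_sum fun l _ => hct i l).trans ?_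
    rw [Finset.sum_add_distrib, ← Finset.mul_sum _ _ (64 * V), Finset.sum_const, Finset.card_range,
      nsmul_eq_mul]
    have := two_sided_geom_le (Finset.mem_range.1 hi)
    exact add_le_add le_rfl (mul_le_mul_of_nonneg_left this (by positivity))
  have := Finset.sum_le_sum hrow
  rw [Finset.sum_const, Finset.card_range, nsmul_eq_mul] at this
  linarith

lemma summand_eq (M : ℝ) (i : ℕ) (x : ℝ) :
    (if ((pq (1 + i) x * pq (1 + i + 1) x : ℕ) : ℝ) ≤ M then
        ((pq (1 + i) x * pq (1 + i + 1) x : ℕ) : ℝ) else 0)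
      = cyl (trunc M) (gaussMap^[i] x) := by
  unfold pq cyl trunc
  have h1 : 1 + i - 1 = i := by omega
  have h2 : 1 + i + 1 - 1 = i + 1 := by omega
  rw [h1, h2, Function.iterate_succ_apply']

lemma sum_eq (M : ℝ) (N : ℕ) (x : ℝ) :
    (∑ i ∈ Finset.Icc 1 N, if ((pq i x * pq (i + 1) x : ℕ) : ℝ) ≤ M then
        ((pq i x * pq (i + 1) x : ℕ) : ℝ) else 0)
      = ∑ i ∈ Finset.range N, cyl (trunc M) (gaussMap^[i] x) := by
  have : Finset.Icc 1 N = Finset.Ico 1 (N + 1) := by ext; simp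
  rw [this, Finset.sum_Ico_eq_sum_range]
  exact Finset.sum_congr rfl fun i _ => summand_eq M i x

lemma harmonic_bound {ε : ℝ} (hε : ε ∈ Set.Ioo (0:ℝ) (1/2)) {N : ℕ} (hN : 2 ≤ N) :
    (harmonic ⌊(N : ℝ) * Real.log N ^ (3 / 2 + ε)⌋₊ : ℝ) ≤ 5 * Real.log N := by
  have hN' : (2:ℝ) ≤ N := by exact_mod_cast hN
  have hlog2 : 1 / 2 < Real.log 2 := by linarith [Real.log_two_gt_d9]
  have hl : Real.log 2 ≤ Real.log N := Real.log_le_log (by norm_num) hN'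
  have hl0 : 0 < Real.log N := by linarith
  obtain ⟨h1, h2⟩ := hε
  -- for small `N` the truncation level may lie below `1`, where the harmonic sum is empty
  rcases lt_or_ge ((N : ℝ) * Real.log N ^ (3 / 2 + ε)) 1 with h | h
  · rw [Nat.floor_eq_zero.2 h]
    simpa using hl0.le
  · refine (harmonic_floor_le_one_add_log _ h).trans ?_
    rw [Real.log_mul (by positivity) (by positivity), Real.log_rpow hl0]
    have h3 : Real.log (Real.log N) ≤ Real.log N :=
      (Real.log_le_sub_one_of_pos hl0).trans (by linarith)
    have h4 : (3 / 2 + ε) * Real.log (Real.log N) ≤ (3 / 2 + ε) * Real.log N :=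
      mul_le_mul_of_nonneg_left h3 (by linarith)
    have h5 : (3 / 2 + ε) * Real.log N ≤ 2 * Real.log N :=
      mul_le_mul_of_nonneg_right (by linarith) hl0.le
    linarith

theorem variance_truncated_sum (ε : ℝ) (hε : ε ∈ Set.Ioo (0:ℝ) (1/2)) :
    ∃ C : ℝ, 0 < C ∧ ∀ N : ℕ, 2 ≤ N →
      (∫ x, (∑ i ∈ Finset.Icc 1 N,
            if ((pq i x * pq (i + 1) x : ℕ) : ℝ) ≤ (N : ℝ) * Real.log N ^ (3 / 2 + ε) then
              ((pq i x * pq (i + 1) x : ℕ) : ℝ) else 0) ^ 2 ∂gaussMeasure) -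
        (∫ x, (∑ i ∈ Finset.Icc 1 N,
            if ((pq i x * pq (i + 1) x : ℕ) : ℝ) ≤ (N : ℝ) * Real.log N ^ (3 / 2 + ε) then
              ((pq i x * pq (i + 1) x : ℕ) : ℝ) else 0) ∂gaussMeasure) ^ 2 ≤
        C * (N : ℝ) ^ 2 * Real.log N ^ (5 / 2 + ε) := by
  refine ⟨20480, by norm_num, fun N hN => ?_⟩
  have hN' : (2:ℝ) ≤ N := by exact_mod_cast hN
  have hl0 : 0 < Real.log N := Real.log_pos (by linarith)
  simp_rw [sum_eq]
  set M := (N : ℝ) * Real.log N ^ (3 / 2 + ε) with hMdef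
  have hM : 0 ≤ M := by positivity
  have hH := harmonic_bound hε hN
  rw [← hMdef] at hH
  have e : Real.log N ^ (5 / 2 + ε) = Real.log N ^ (3 / 2 + ε) * Real.log N := by
    rw [← Real.rpow_add_one hl0.ne']
    ring_nf
  calc _ ≤ N * 32 * (64 * ∫ x, cyl (trunc M) x * cyl (trunc M) x ∂gaussMeasure) :=
        variance_le hM N
    _ ≤ N * 32 * (64 * (2 * (M * (5 * Real.log N)))) := by
        have := second_moment hM
        have : (2 * (M * harmonic ⌊M⌋₊) : ℝ) ≤ 2 * (M * (5 * Real.log N)) := by gcongr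
        gcongr
        linarith
    _ = 20480 * (N : ℝ) ^ 2 * Real.log N ^ (5 / 2 + ε) := by
        rw [e, hMdef]
        ring
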